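/- Let p be a prime, t > 1 an integer, and define S(n) = 𝔖_{p^t}(p^t·n). If S is eventually periodic with least eventual period T, then p does not divide T. -/

import Mathlib

/-- The last non-zero digit of `n` in base `b`: if `n = b^r * n'` with `b ∤ n'`,
this is `n' % b`. -/
def lastNonzeroDigit (b n : ℕ) : ℕ := (n / b ^ (Nat.maxPowDiv b n)) % b

/-- `𝔖_b(n)`: the last non-zero digit of `n^n` in base `b`. -/
def lnz (b n : ℕ) : ℕ := lastNonzeroDigit b (n ^ n)

theorem aux_digit (p t E m : ℕ) (hp : p.Prime) (ht : 1 < t) (hm : ¬ p ∣ m) :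
    lastNonzeroDigit (p ^ t) (p ^ E * m) = (p ^ (E % t) * m) % p ^ t := by
  have hm0 : m ≠ 0 := by rintro rfl; simp at hm
  have hE : p ^ E * m = (p ^ t) ^ (E / t) * (p ^ (E % t) * m) := by
    rw [← mul_assoc, ← pow_mul, ← pow_add, Nat.div_add_mod]
  have hnd : ¬ p ^ t ∣ p ^ (E % t) * m := by
    intro h
    have hlt : E % t < t := Nat.mod_lt _ (by omega)
    have h1 : p ^ (E % t) * p ∣ p ^ (E % t) * m := by
      rw [← pow_succ]
      exact (pow_dvd_pow p hlt).trans h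
    exact hm (Nat.dvd_of_mul_dvd_mul_left (pow_pos hp.pos _) h1)
  have hv : padicValNat (p ^ t) (p ^ E * m) = E / t := by
    have := Nat.maxPowDvdDiv_of_pow_mul_eq (p := p ^ t) (n := p ^ E * m)
      (mul_ne_zero (pow_ne_zero _ hp.ne_zero) hm0) hE.symm hnd
    exact congrArg Prod.fst this
  unfold lastNonzeroDigit
  have h2 : Nat.maxPowDiv (p ^ t) (p ^ E * m) = E / t := hv
  rw [h2, hE, Nat.mul_div_cancel_left _ (pow_pos (pow_pos hp.pos _) _)]

theorem aux_lnz (p t v m : ℕ) (hp : p.Prime) (ht : 1 < t) (hm : ¬ p ∣ m) :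
    lnz (p ^ t) (p ^ t * (p ^ v * m)) =
      (p ^ (((t + v) * (p ^ t * (p ^ v * m))) % t) * m ^ (p ^ t * (p ^ v * m))) % p ^ t := by
  unfold lnz
  rw [← aux_digit p t _ _ hp ht (fun h => hm (hp.dvd_of_dvd_pow h))]
  congr 1
  generalize hN : p ^ t * (p ^ v * m) = N
  have hb : N = p ^ (t + v) * m := by rw [← hN, pow_add, mul_assoc]
  calc N ^ N = (p ^ (t + v) * m) ^ N := by rw [← hb]
    _ = _ := by rw [mul_pow, ← pow_mul]

theorem aux_le (p t r r' x y : ℕ) (hp : p.Prime) (hr' : r' < t)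
    (hy : ¬ p ∣ y) (h : p ^ r * x ≡ p ^ r' * y [MOD p ^ t]) : r ≤ r' := by
  by_contra hlt
  have hlt : r' + 1 ≤ r := by omega
  have h1 : p ^ r * x ≡ p ^ r' * y [MOD p ^ (r' + 1)] := h.of_dvd (pow_dvd_pow p hr')
  have h2 : p ^ (r' + 1) ∣ p ^ r' * y :=
    (h1.dvd_iff dvd_rfl).1 ((pow_dvd_pow p hlt).trans (dvd_mul_right _ _))
  rw [pow_succ] at h2
  exact hy (Nat.dvd_of_mul_dvd_mul_left (pow_pos hp.pos _) h2)

theorem aux_inj (p t r r' x y : ℕ) (hp : p.Prime) (hr : r < t) (hr' : r' < t)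
    (hx : ¬ p ∣ x) (hy : ¬ p ∣ y) (h : (p ^ r * x) % p ^ t = (p ^ r' * y) % p ^ t) :
    r = r' ∧ x ≡ y [MOD p] := by
  have h : p ^ r * x ≡ p ^ r' * y [MOD p ^ t] := h
  have e : r = r' := le_antisymm (aux_le p t r r' x y hp hr' hy h)
    (aux_le p t r' r y x hp hr hx h.symm)
  subst e
  refine ⟨rfl, ?_⟩
  have h1 : p ^ r * x ≡ p ^ r * y [MOD p ^ r * p] := by
    rw [← pow_succ]; exact h.of_dvd (pow_dvd_pow p hr)
  exact Nat.ModEq.mul_left_cancel' (pow_ne_zero _ hp.ne_zero) h1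

theorem aux_per (f : ℕ → ℕ) (T n₀ : ℕ) (h : ∀ n ≥ n₀, f (n + T) = f n) (k : ℕ) :
    ∀ n ≥ n₀, f (n + T * k) = f n := by
  induction k with
  | zero => intro n _; simp
  | succ k ih =>
    intro n hn
    rw [Nat.mul_succ, ← add_assoc, h _ (by omega), ih n hn]

/-- The core consequence of having period `K = p ^ b * c`. -/
theorem aux_core (p t b c w u n₀ : ℕ) (hp : p.Prime) (ht : 1 < t)
    (hc : ¬ p ∣ c) (hw : ¬ p ∣ w) (huc : u + c = p * w) (hu : n₀ ≤ u)
    (h : ∀ n ≥ n₀, lnz (p ^ t) (p ^ t * (n + p ^ b * c)) = lnz (p ^ t) (p ^ t * n)) :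
    ((t + (b + 1)) * (p ^ t * (p ^ (b + 1) * w))) % t = ((t + b) * (p ^ t * (p ^ b * u))) % t ∧
    w ^ (p ^ t * (p ^ (b + 1) * w)) ≡ u ^ (p ^ t * (p ^ b * u)) [MOD p] := by
  have hup : ¬ p ∣ u := fun hd => hc ((Nat.dvd_add_right hd).1 (huc ▸ dvd_mul_right p w))
  have h1 := h (p ^ b * u) (hu.trans (Nat.le_mul_of_pos_left _ (pow_pos hp.pos _)))
  rw [← mul_add, huc, ← mul_assoc (p ^ b), ← pow_succ, aux_lnz p t _ _ hp ht hw,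
    aux_lnz p t _ _ hp ht hup] at h1
  exact aux_inj p t _ _ _ _ hp (Nat.mod_lt _ (by omega)) (Nat.mod_lt _ (by omega))
    (fun h => hw (hp.dvd_of_dvd_pow h)) (fun h => hup (hp.dvd_of_dvd_pow h)) h1

theorem aux_fermat (p x N : ℕ) (hp : p.Prime) (hx : ¬ p ∣ x) (hN : N ≡ 1 [MOD p - 1])
    (hN0 : 1 ≤ N) : x ^ N ≡ x [MOD p] := by
  obtain ⟨k, hk⟩ := (Nat.modEq_iff_dvd' hN0).1 hN.symm
  have : N = (p - 1) * k + 1 := by omega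
  rw [this, pow_succ, pow_mul]
  have h1 : x ^ (p - 1) ≡ 1 [MOD p] := by
    rw [← Nat.totient_prime hp]
    exact Nat.ModEq.pow_totient ((Nat.Prime.coprime_iff_not_dvd hp).2 hx).symm
  simpa using (h1.pow k).mul_right x

theorem aux_odd (p t T n₀ : ℕ) (hp : p.Prime) (hp2 : p ≠ 2) (ht : 1 < t) (hT : 0 < T)
    (h : ∀ n ≥ n₀, lnz (p ^ t) (p ^ t * (n + T)) = lnz (p ^ t) (p ^ t * n)) : False := by
  have hp3 : 3 ≤ p := by have := hp.two_le; omega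
  have hK := aux_per (fun n => lnz (p ^ t) (p ^ t * n)) T n₀ h (p - 1)
  obtain ⟨b, c, hc, hbc⟩ := Nat.exists_eq_pow_mul_and_not_dvd
    (n := T * (p - 1)) (by apply mul_ne_zero <;> omega) p hp.ne_one
  simp only [hbc] at hK
  have hp1 : p ≡ 1 [MOD p - 1] :=
    ((Nat.modEq_iff_dvd' (by omega)).2 dvd_rfl).symm
  have hcop : Nat.Coprime (p - 1) p := by
    have := (Nat.coprime_self_sub_right (m := 1) (n := p) (by omega)).2 (by simp)
    exact this.symm
  have hcd : (p - 1) ∣ c := by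
    have : (p - 1) ∣ p ^ b * c := hbc ▸ dvd_mul_left _ _
    exact (hcop.pow_right b).dvd_of_dvd_mul_left this
  have hc0 : c ≡ 0 [MOD p - 1] := (Nat.modEq_zero_iff_dvd).2 hcd
  -- key
  have key : ∀ w, ¬ p ∣ w → w ≡ 1 [MOD p - 1] → c + n₀ + 1 ≤ w → w + c ≡ 0 [MOD p] := by
    intro w hw hw1 hwl
    have hle : w ≤ p * w := Nat.le_mul_of_pos_left _ hp.pos
    obtain ⟨u, hu⟩ : ∃ u, u + c = p * w := ⟨p * w - c, by omega⟩
    have hup : ¬ p ∣ u := fun hd => hc ((Nat.dvd_add_right hd).1 (hu ▸ dvd_mul_right p w))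
    have h2 := (aux_core p t b c w u n₀ hp ht hc hw hu (by omega) hK).2
    have hu1 : u ≡ 1 [MOD p - 1] := by
      have e1 : u + c ≡ u + 0 [MOD p - 1] := hc0.add_left u
      have e2 : p * w ≡ 1 * 1 [MOD p - 1] := hp1.mul hw1
      rw [hu] at e1
      exact e1.symm.trans e2
    have a1 : p ^ t * (p ^ (b + 1) * w) ≡ 1 [MOD p - 1] := by
      simpa using (hp1.pow t).mul ((hp1.pow (b + 1)).mul hw1)
    have a2 : p ^ t * (p ^ b * u) ≡ 1 [MOD p - 1] := by
      simpa using (hp1.pow t).mul ((hp1.pow b).mul hu1)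
    have pos : ∀ k, 1 ≤ p ^ k := fun k => Nat.pow_pos hp.pos
    have b1 := aux_fermat p w _ hp hw a1
      (Nat.mul_pos (pos _) (Nat.mul_pos (pos _) (by omega)))
    have b2 := aux_fermat p u _ hp hup a2
      (Nat.mul_pos (pos _) (Nat.mul_pos (pos _) (by omega)))
    have h3 : w ≡ u [MOD p] := b1.symm.trans (h2.trans b2)
    have h4 := h3.add_right c
    rw [hu] at h4
    exact h4.trans ((Nat.modEq_zero_iff_dvd).2 (dvd_mul_right _ _))
  obtain ⟨q, rfl⟩ : ∃ q, p = q + 1 := ⟨p - 1, by omega⟩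
  simp only [Nat.add_sub_cancel] at *
  set k := c + n₀ + 1 with hk
  have m1 : ∀ j, 1 + q * j ≡ 1 [MOD q] := fun j => by simp [Nat.ModEq]
  have big : k ≤ q * ((q + 1) * k) :=
    (Nat.le_mul_of_pos_left k (by omega : 0 < q + 1)).trans
      (Nat.le_mul_of_pos_left _ (by omega : 0 < q))
  -- w₁ ≡ 1, w₂ ≡ -1
  have w1 : 1 + q * ((q + 1) * k) ≡ 1 [MOD q + 1] := by
    simp [Nat.ModEq, show q * ((q + 1) * k) = (q + 1) * (q * k) by ring]
  have w2 : 1 + q * ((q + 1) * k + 2) ≡ q [MOD q + 1] := by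
    have : 1 + q * ((q + 1) * k + 2) = q + (q + 1) * (q * k + 1) := by ring
    simp [this, Nat.ModEq]
  have n1 : ¬ (q + 1) ∣ 1 + q * ((q + 1) * k) := by
    intro hd
    have := Nat.le_of_dvd one_pos ((w1.dvd_iff dvd_rfl).1 hd)
    omega
  have n2 : ¬ (q + 1) ∣ 1 + q * ((q + 1) * k + 2) := by
    intro hd
    have := Nat.le_of_dvd (by omega) ((w2.dvd_iff dvd_rfl).1 hd)
    omega
  have k1 := key _ n1 (m1 _) (by omega)
  have k2 := key _ n2 (m1 _) (by rw [mul_add]; omega)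
  have k3 := (w1.symm.trans ((Nat.ModEq.add_right_cancel' c (k1.trans k2.symm)))).trans w2
  have := Nat.ModEq.eq_of_lt_of_lt k3 (by omega) (by omega)
  omega

theorem aux_two (t s t' T n₀ : ℕ) (ht : 1 < t) (hT : 0 < T) (hts : t = 2 ^ s * t')
    (ht' : ¬ 2 ∣ t') (h1 : t' ≠ 1)
    (h : ∀ n ≥ n₀, lnz (2 ^ t) (2 ^ t * (n + T)) = lnz (2 ^ t) (2 ^ t * n)) : False := by
  have ht0 : t' ≠ 0 := by rintro rfl; simp at ht'
  have hK := aux_per (fun n => lnz (2 ^ t) (2 ^ t * n)) T n₀ h t'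
  obtain ⟨b, c, hc, hbc⟩ := Nat.exists_eq_pow_mul_and_not_dvd
    (n := T * t') (by apply mul_ne_zero <;> omega) 2 (by norm_num)
  simp only [hbc] at hK
  have hcop : Nat.Coprime t' 2 := ((Nat.Prime.coprime_iff_not_dvd Nat.prime_two).2 ht').symm
  have hcd : t' ∣ c := by
    have : t' ∣ 2 ^ b * c := hbc ▸ dvd_mul_left _ _
    exact (hcop.pow_right b).dvd_of_dvd_mul_left this
  set k := c + n₀ with hk
  have hkt : k ≤ t' * k := Nat.le_mul_of_pos_left _ (by omega)
  obtain ⟨w, hwd⟩ : ∃ w, w = 1 + 2 * (t' * k) := ⟨_, rfl⟩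
  obtain ⟨u, hu⟩ : ∃ u, u + c = 2 * w := ⟨2 * w - c, by omega⟩
  have h2 := (aux_core 2 t b c w u n₀ Nat.prime_two ht hc (by omega) hu (by omega) hK).1
  have h3 : (t + (b + 1)) * (2 ^ t * (2 ^ (b + 1) * w)) ≡ (t + b) * (2 ^ t * (2 ^ b * u)) [MOD t'] :=
    Nat.ModEq.of_dvd (hts ▸ dvd_mul_left _ _) h2
  have e1 : u ≡ 2 * w [MOD t'] := by
    have : u + c ≡ u + 0 [MOD t'] := ((Nat.modEq_zero_iff_dvd).2 hcd).add_left u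
    rw [hu] at this
    exact this.symm
  have e2 : (t + b) * (2 ^ t * (2 ^ b * u)) ≡ (t + b) * (2 ^ t * (2 ^ b * (2 * w))) [MOD t'] :=
    ((e1.mul_left _).mul_left _).mul_left _
  have e3 := h3.trans e2
  have e4 : (t + (b + 1)) * (2 ^ t * (2 ^ (b + 1) * w)) =
      2 ^ (t + (b + 1)) * w + (t + b) * (2 ^ t * (2 ^ b * (2 * w))) := by ring
  rw [e4] at e3
  have e5 : 2 ^ (t + (b + 1)) * w ≡ 0 [MOD t'] := by
    apply Nat.ModEq.add_right_cancel' ((t + b) * (2 ^ t * (2 ^ b * (2 * w))))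
    simpa using e3
  have e6 : t' ∣ w :=
    (hcop.pow_right _).dvd_of_dvd_mul_left ((Nat.modEq_zero_iff_dvd).1 e5)
  rw [hwd] at e6
  have e7 : t' ∣ 1 := (Nat.dvd_add_left (Dvd.dvd.mul_left (dvd_mul_right t' k) 2)).1 e6
  exact h1 (Nat.dvd_one.1 e7)

theorem aux_pow (s t n : ℕ) (ht : 1 < t) (hts : t = 2 ^ s) (hn : n ≠ 0) :
    lnz (2 ^ t) (2 ^ t * n) = 1 := by
  obtain ⟨v, m, hm, rfl⟩ := Nat.exists_eq_pow_mul_and_not_dvd hn 2 (by norm_num)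
  rw [aux_lnz 2 t v m Nat.prime_two ht hm]
  have hst : t ∣ 2 ^ t := by
    have : s ≤ t := by rw [hts]; exact Nat.lt_two_pow_self.le
    conv_lhs => rw [hts]
    exact pow_dvd_pow 2 this
  have h0 : ((t + v) * (2 ^ t * (2 ^ v * m))) % t = 0 :=
    Nat.mod_eq_zero_of_dvd (Dvd.dvd.mul_left (Dvd.dvd.mul_right hst _) _)
  rw [h0, pow_zero, one_mul]
  have hcop : Nat.Coprime m (2 ^ t) :=
    Nat.Coprime.pow_right _ ((Nat.Prime.coprime_iff_not_dvd Nat.prime_two).2 hm).symm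
  have h1 : m ^ Nat.totient (2 ^ t) ≡ 1 [MOD 2 ^ t] := Nat.ModEq.pow_totient hcop
  have h2 : Nat.totient (2 ^ t) ∣ 2 ^ t * (2 ^ v * m) := by
    rw [Nat.totient_prime_pow Nat.prime_two (by omega)]
    simp only [Nat.add_one_sub_one, mul_one]
    exact Dvd.dvd.mul_right (pow_dvd_pow 2 (by omega)) _
  obtain ⟨j, hj⟩ := h2
  rw [hj, pow_mul]
  have h3 := h1.pow j
  rw [one_pow] at h3
  exact Eq.trans h3 (Nat.mod_eq_of_lt (Nat.one_lt_two_pow (by omega)))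

theorem stmt_13 (p t : ℕ) (hp : p.Prime) (ht : 1 < t) (T : ℕ) (hT : 0 < T)
    (hper : ∃ n₀ : ℕ, ∀ n ≥ n₀,
      lnz (p ^ t) (p ^ t * (n + T)) = lnz (p ^ t) (p ^ t * n))
    (hleast : ∀ T' : ℕ, 0 < T' →
      (∃ n₀ : ℕ, ∀ n ≥ n₀,
        lnz (p ^ t) (p ^ t * (n + T')) = lnz (p ^ t) (p ^ t * n)) → T ≤ T') :
    ¬ p ∣ T := by
  obtain ⟨n₀, h⟩ := hper
  by_cases hp2 : p = 2
  · subst hp2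
    obtain ⟨s, t', ht', hts⟩ := Nat.exists_eq_pow_mul_and_not_dvd (n := t) (by omega) 2 (by norm_num)
    by_cases h1 : t' = 1
    · rw [h1, mul_one] at hts
      have := hleast 1 one_pos ⟨1, fun n hn => by
        rw [aux_pow s t _ ht hts (by omega), aux_pow s t _ ht hts (by omega)]⟩
      omega
    · exact (aux_two t s t' T n₀ ht hT hts ht' h1 h).elim
  · exact (aux_odd p t T n₀ hp hp2 ht hT h).elim
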